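/- arXiv:1907.07376 — 2 statements merged into one kernel-verified Lean document; each statement's English description precedes it below -/
import Mathlib

section
/- Let G = (V,E) be a connected multigraph and W ⊆ E such that the subgraph G[W] induced by W is a forest. Let W_1, ..., W_r be the components of G[W], and let G⋆W be the graph obtained from G by adding, for each i = 1,...,r, a new vertex w_i together with new edges joining w_i to every vertex of W_i. Let W' = E(G⋆W) − E(G). Then for any W_0 ⊆ W, τ_G(W) = τ_{G⋆W}(W') = τ_{(G⋆W) − W_0}(W'). -/
/-!
Spanning trees of multigraphs: common definitions.

A multigraph on a vertex type `V` with edge type `E` is given by an incidence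
map `inc : E → Sym2 V` sending each edge to its (unordered) pair of endpoints.
-/

namespace PaperST

universe u v

/-- A multigraph on vertex type `V` with edge type `E`. -/
structure Multigraph (V : Type u) (E : Type v) where
  /-- the two (possibly equal) endpoints of each edge -/
  inc : E → Sym2 V

namespace Multigraph

variable {V : Type u} {E : Type v}

/-- One step along an edge of `T`. -/
def Step (G : Multigraph V E) (T : Set E) (u v : V) : Prop :=
  ∃ e ∈ T, G.inc e = s(u, v)

theorem step_symm (G : Multigraph V E) (T : Set E) : Symmetric (G.Step T) := by
  rintro u v ⟨e, he, hinc⟩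
  exact ⟨e, he, by rw [hinc]; exact Sym2.eq_swap⟩

/-- Reachability using only edges in `T`. -/
def Reach (G : Multigraph V E) (T : Set E) : V → V → Prop :=
  Relation.ReflTransGen (G.Step T)

/-- The spanning subgraph `G⟨T⟩` is connected. -/
def ConnectedOn (G : Multigraph V E) (T : Set E) : Prop :=
  ∀ u v : V, G.Reach T u v

/-- `G` is connected. -/
def Connected (G : Multigraph V E) : Prop :=
  G.ConnectedOn Set.univ

/-- `G` has no loops. -/
def Loopless (G : Multigraph V E) : Prop :=
  ∀ e : E, ¬ (G.inc e).IsDiag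

/-- A spanning tree of a (finite) multigraph: a connected spanning subgraph
with `|V| - 1` edges. -/
def IsSpanningTree (G : Multigraph V E) (T : Set E) : Prop :=
  G.ConnectedOn T ∧ T.ncard + 1 = Nat.card V

/-- The set `ST_G(M)` of spanning trees of `G` containing all edges of `M`. -/
def ST (G : Multigraph V E) (M : Set E) : Set (Set E) :=
  {T | G.IsSpanningTree T ∧ M ⊆ T}

/-- `τ_G(M)`: the number of spanning trees of `G` containing all edges of `M`. -/
noncomputable def tau (G : Multigraph V E) (M : Set E) : ℕ :=
  (G.ST M).ncard

/-- The spanning subgraph `G⟨W⟩` is a forest (no cycles): there are no loops in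
`W` and every edge of `W` is a bridge of `G⟨W⟩`. -/
def IsForest (G : Multigraph V E) (W : Set E) : Prop :=
  ∀ e ∈ W, ¬ (G.inc e).IsDiag ∧
    ∀ u v : V, G.inc e = s(u, v) → ¬ G.Reach (W \ {e}) u v

/-- Edges with all endpoints in `U`: the edge set of the induced subgraph `G[U]`. -/
def edgesWithin (G : Multigraph V E) (U : Set V) : Set E :=
  {e | ∀ v ∈ G.inc e, v ∈ U}

/-- `E_G(U₁, U₂)`: edges with one end in `U₁` and the other end in `U₂`. -/
def edgesBetween (G : Multigraph V E) (U₁ U₂ : Set V) : Set E :=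
  {e | ∃ u v, G.inc e = s(u, v) ∧ u ∈ U₁ ∧ v ∈ U₂}

/-- `E_G(U) = E_G(U, V − U)`: edges with one end in `U` and the other outside. -/
def edgeBoundary (G : Multigraph V E) (U : Set V) : Set E :=
  G.edgesBetween U Uᶜ

/-- `U` is a clique of `G`: the induced subgraph `G[U]` is a complete graph,
i.e. exactly one edge joins each pair of distinct vertices of `U`, and there
are neither loops nor parallel edges inside `U`. -/
def IsClique (G : Multigraph V E) (U : Set V) : Prop :=
  (∀ u ∈ U, ∀ v ∈ U, u ≠ v → ∃! e : E, G.inc e = s(u, v)) ∧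
    ∀ e ∈ G.edgesWithin U, ¬ (G.inc e).IsDiag

/-- The degree of a vertex: the number of edges incident with it. -/
noncomputable def degree (G : Multigraph V E) (v : V) : ℕ :=
  {e : E | v ∈ G.inc e}.ncard

/-- The vertices incident with some edge of `W`: the vertex set of `G[W]`. -/
def supp (G : Multigraph V E) (W : Set E) : Set V :=
  {v | ∃ e ∈ W, v ∈ G.inc e}

/-- Edges `e` and `f` lie in the same component of `G[W]`. -/
def EdgeConn (G : Multigraph V E) (W : Set E) (e f : E) : Prop :=
  ∃ u v : V, u ∈ G.inc e ∧ v ∈ G.inc f ∧ G.Reach W u v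

/-- Every component of `G[W]` is a star whose center lies in `C`. -/
def StarComponents (G : Multigraph V E) (W : Set E) (C : Set V) : Prop :=
  ∀ e ∈ W, ∃ w ∈ C, ∀ f ∈ W, G.EdgeConn W e f →
    (w ∈ G.inc f ∧ ¬ (G.inc f).IsDiag ∧
      ∀ g ∈ W, G.EdgeConn W e g → G.inc g = G.inc f → g = f)

/-- The setoid on `V` identifying the vertices connected by edges of `W`. -/
def contractSetoid (G : Multigraph V E) (W : Set E) : Setoid V where
  r := G.Reach W
  iseqv := ⟨fun _ => Relation.ReflTransGen.refl,
    fun h => (@Relation.ReflTransGen.symmetric _ _ ⟨fun _ _ h => G.step_symm W h⟩).symm _ _ h,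
    fun h h' => Relation.ReflTransGen.trans h h'⟩

/-- The contraction `G/W` of the edges in `W`. -/
def contract (G : Multigraph V E) (W : Set E) :
    Multigraph (Quotient (G.contractSetoid W)) {e : E // e ∉ W} :=
  ⟨fun e => (G.inc e.val).map (Quotient.mk (G.contractSetoid W))⟩

/-- Deletion `G − D` of the edges in `D`. -/
def deleteEdges (G : Multigraph V E) (D : Set E) : Multigraph V {e : E // e ∉ D} :=
  ⟨fun e => G.inc e.val⟩

/-- The closed neighbourhood `N_G[S]`. -/
def closedNbhd (G : Multigraph V E) (S : Set V) : Set V :=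
  S ∪ {v | ∃ u ∈ S, ∃ e : E, G.inc e = s(u, v)}

/-- The induced subgraph `G[A]`, described using a choice `ends` of the pair of
endpoints of each edge. -/
def induce (G : Multigraph V E) (A : Set V) (ends : E → V × V)
    (hends : ∀ e, G.inc e = s((ends e).1, (ends e).2)) :
    Multigraph A {e : E // e ∈ G.edgesWithin A} :=
  ⟨fun e => s(⟨(ends e.val).1, e.prop _ (by rw [hends]; exact Sym2.mem_mk_left _ _)⟩,
              ⟨(ends e.val).2, e.prop _ (by rw [hends]; exact Sym2.mem_mk_right _ _)⟩)⟩

end Multigraph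


open Multigraph

/-- The graph `G⋆W`: for each component (indexed by `i : Fin r` via `comp`) of
`G[W]`, add a new vertex `wᵢ` joined to every vertex of that component. -/
def Multigraph.starGraph {V : Type u} {E : Type v} (G : Multigraph V E)
    (W : Set E) {r : ℕ} (comp : V → Fin r) :
    Multigraph (V ⊕ Fin r)
      (E ⊕ {p : Fin r × V // p.2 ∈ G.supp W ∧ comp p.2 = p.1}) :=
  ⟨Sum.elim (fun e => (G.inc e).map Sum.inl)
    (fun p => s(Sum.inr p.val.1, Sum.inl p.val.2))⟩

section Helpers

variable {V : Type u} {E : Type v}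

theorem reach_symm' (G : Multigraph V E) {T : Set E} {a b : V} (h : G.Reach T a b) :
    G.Reach T b a := (G.contractSetoid T).symm h

theorem reach_mono' (G : Multigraph V E) {S T : Set E} (hST : S ⊆ T) {a b : V}
    (h : G.Reach S a b) : G.Reach T a b :=
by
  induction h with
  | refl => exact Relation.ReflTransGen.refl
  | tail _ hs ih =>
    obtain ⟨e, he, hi⟩ := hs
    exact ih.tail ⟨e, hST he, hi⟩

theorem reach_map' {V' : Type*} {E' : Type*} (G : Multigraph V E) (H : Multigraph V' E')
    {S : Set E} {T : Set E'} (g : V → V')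
    (hg : ∀ e ∈ S, ∀ u v, G.inc e = s(u, v) → H.Reach T (g u) (g v)) {a b : V}
    (h : G.Reach S a b) : H.Reach T (g a) (g b) := by
  induction h with
  | refl => exact Relation.ReflTransGen.refl
  | tail _ hs ih =>
    obtain ⟨e, he, hi⟩ := hs
    exact ih.trans (hg e he _ _ hi)

theorem reach_insert' (G : Multigraph V E) {T : Set E} {e : E} {a b : V}
    (he : G.inc e = s(a, b)) {x y : V} (h : G.Reach (insert e T) x y) :
    G.Reach T x y ∨ (G.Reach T x a ∧ G.Reach T b y) ∨ (G.Reach T x b ∧ G.Reach T a y) := by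
  induction h with
  | refl => exact Or.inl Relation.ReflTransGen.refl
  | @tail y z _ hs ih =>
    obtain ⟨f, hf, hi⟩ := hs
    rcases hf with rfl | hf
    · rw [he] at hi
      rcases Sym2.eq_iff.1 hi with ⟨rfl, rfl⟩ | ⟨rfl, rfl⟩
      · rcases ih with h | ⟨h, h'⟩ | ⟨h, h'⟩
        · exact Or.inr (Or.inl ⟨h, Relation.ReflTransGen.refl⟩)
        · exact Or.inr (Or.inl ⟨h, Relation.ReflTransGen.refl⟩)
        · exact Or.inl h
      · rcases ih with h | ⟨h, h'⟩ | ⟨h, h'⟩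
        · exact Or.inr (Or.inr ⟨h, Relation.ReflTransGen.refl⟩)
        · exact Or.inl h
        · exact Or.inr (Or.inr ⟨h, Relation.ReflTransGen.refl⟩)
    · have hs : G.Reach T y z := Relation.ReflTransGen.single ⟨f, hf, hi⟩
      rcases ih with h | ⟨h, h'⟩ | ⟨h, h'⟩
      · exact Or.inl (h.trans hs)
      · exact Or.inr (Or.inl ⟨h, h'.trans hs⟩)
      · exact Or.inr (Or.inr ⟨h, h'.trans hs⟩)

noncomputable def ncomp (G : Multigraph V E) (T : Set E) : ℕ :=
  Nat.card (Quotient (G.contractSetoid T))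

theorem ncomp_insert_of_reach (G : Multigraph V E) {T : Set E} {e : E} {a b : V}
    (he : G.inc e = s(a, b)) (hr : G.Reach T a b) : ncomp G (insert e T) = ncomp G T := by
  have : G.contractSetoid (insert e T) = G.contractSetoid T := by
    ext x y
    constructor
    · intro h
      rcases reach_insert' G he h with h | ⟨h, h'⟩ | ⟨h, h'⟩
      · exact h
      · exact (h.trans hr).trans h'
      · exact (h.trans (reach_symm' G hr)).trans h'
    · intro h
      exact reach_mono' G (Set.subset_insert _ _) h
  unfold ncomp
  rw [this]

theorem ncomp_insert_of_not_reach [Finite V] (G : Multigraph V E) {T : Set E} {e : E} {a b : V}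
    (he : G.inc e = s(a, b)) (hr : ¬ G.Reach T a b) :
    ncomp G (insert e T) + 1 = ncomp G T := by
  classical
  let q : Quotient (G.contractSetoid T) → Quotient (G.contractSetoid (insert e T)) :=
    Quotient.map id (fun x y h => reach_mono' G (Set.subset_insert _ _) h)
  let b' : Quotient (G.contractSetoid T) := Quotient.mk _ b
  have hab : G.Reach (insert e T) a b := Relation.ReflTransGen.single ⟨e, Set.mem_insert _ _, he⟩
  have hbij : Function.Bijective (fun x : ({b'}ᶜ : Set (Quotient (G.contractSetoid T))) => q x) := by
    constructor
    · rintro ⟨x, hx⟩ ⟨y, hy⟩ hxy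
      induction x using Quotient.inductionOn with | _ x
      induction y using Quotient.inductionOn with | _ y
      have hx' : ¬ G.Reach T x b := fun h => hx (Quotient.sound h)
      have hy' : ¬ G.Reach T y b := fun h => hy (Quotient.sound h)
      have h : G.Reach (insert e T) x y := Quotient.exact hxy
      apply Subtype.ext
      apply Quotient.sound
      rcases reach_insert' G he h with h | ⟨h, h'⟩ | ⟨h, h'⟩
      · exact h
      · exact absurd (reach_symm' G h') hy'
      · exact absurd h hx'
    · intro z
      induction z using Quotient.inductionOn with | _ z
      by_cases hz : G.Reach T z b
      · refine ⟨⟨Quotient.mk _ a, fun h => hr (Quotient.exact h)⟩, ?_⟩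
        exact Quotient.sound (hab.trans (reach_mono' G (Set.subset_insert _ _) (reach_symm' G hz)))
      · exact ⟨⟨Quotient.mk _ z, fun h => hz (Quotient.exact h)⟩, rfl⟩
  have h1 := Nat.card_eq_of_bijective _ hbij
  have h2 := Set.ncard_add_ncard_compl ({b'} : Set (Quotient (G.contractSetoid T)))
  rw [Set.ncard_singleton] at h2
  rw [Nat.card_coe_set_eq] at h1
  unfold ncomp
  omega

theorem ncomp_empty (G : Multigraph V E) : ncomp G ∅ = Nat.card V := by
  unfold ncomp
  symm
  apply Nat.card_eq_of_bijective (Quotient.mk (G.contractSetoid ∅))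
  refine ⟨fun x y h => ?_, Quotient.mk_surjective⟩
  have h : G.Reach ∅ x y := Quotient.exact h
  induction h with
  | refl => rfl
  | tail _ hs _ => obtain ⟨e, he, _⟩ := hs; exact absurd he (Set.notMem_empty _)

theorem card_le_ncomp [Finite V] [Finite E] (G : Multigraph V E) (T : Set E) :
    Nat.card V ≤ ncomp G T + T.ncard := by
  induction T, Set.toFinite T using Set.Finite.induction_on with
  | empty => simp [ncomp_empty]
  | @insert e T he hT ih =>
    rw [Set.ncard_insert_of_notMem he hT]
    obtain ⟨a, b, hab⟩ : ∃ a b, G.inc e = s(a, b) := by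
      induction h : G.inc e with | _ a b => exact ⟨a, b, rfl⟩
    by_cases hr : G.Reach T a b
    · rw [ncomp_insert_of_reach G hab hr]; omega
    · have := ncomp_insert_of_not_reach G hab hr; omega

theorem forest_ncomp [Finite V] [Finite E] (G : Multigraph V E) (T : Set E) (hf : G.IsForest T) :
    ncomp G T + T.ncard = Nat.card V := by
  induction T, Set.toFinite T using Set.Finite.induction_on with
  | empty => simp [ncomp_empty]
  | @insert e T he hT ih =>
    rw [Set.ncard_insert_of_notMem he hT]
    obtain ⟨a, b, hab⟩ : ∃ a b, G.inc e = s(a, b) := by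
      induction h : G.inc e with | _ a b => exact ⟨a, b, rfl⟩
    have hr : ¬ G.Reach T a b := by
      intro h
      refine (hf e (Set.mem_insert _ _)).2 a b hab (reach_mono' G ?_ h)
      intro f hf'
      exact ⟨Set.mem_insert_of_mem _ hf', fun h => he (h ▸ hf')⟩
    have hf' : G.IsForest T := fun f hfT => ⟨(hf f (Set.mem_insert_of_mem _ hfT)).1,
      fun u v huv h => (hf f (Set.mem_insert_of_mem _ hfT)).2 u v huv
        (reach_mono' G (Set.diff_subset_diff_left (Set.subset_insert _ _)) h)⟩
    have := ncomp_insert_of_not_reach G hab hr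
    have := ih hf'
    omega

theorem connected_card [Finite V] [Finite E] (G : Multigraph V E) {T : Set E}
    (h : G.ConnectedOn T) : Nat.card V ≤ T.ncard + 1 := by
  have h1 := card_le_ncomp G T
  have : ncomp G T ≤ 1 := by
    unfold ncomp
    rw [Finite.card_le_one_iff_subsingleton]
    refine ⟨fun x y => ?_⟩
    induction x using Quotient.inductionOn
    induction y using Quotient.inductionOn
    exact Quotient.sound (h _ _)
  omega

theorem mem_supp_of_step (G : Multigraph V E) {W : Set E} {e : E} (he : e ∈ W) {a b : V}
    (h : G.inc e = s(a, b)) : a ∈ G.supp W ∧ b ∈ G.supp W :=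
  ⟨⟨e, he, by rw [h]; exact Sym2.mem_mk_left _ _⟩, ⟨e, he, by rw [h]; exact Sym2.mem_mk_right _ _⟩⟩

theorem reach_supp (G : Multigraph V E) {W : Set E} {a b : V} (h : G.Reach W a b) :
    a = b ∨ (a ∈ G.supp W ∧ b ∈ G.supp W) := by
  induction h with
  | refl => exact Or.inl rfl
  | tail _ hs ih =>
    obtain ⟨e, he, hi⟩ := hs
    have := mem_supp_of_step G he hi
    rcases ih with rfl | h
    · exact Or.inr this
    · exact Or.inr ⟨h.1, this.2⟩

theorem forest_card [Finite V] [Finite E] (G : Multigraph V E)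
    (W : Set E) (hforest : G.IsForest W)
    (r : ℕ) (comp : V → Fin r)
    (hcomp : ∀ u v : V, u ∈ G.supp W → v ∈ G.supp W →
      (comp u = comp v ↔ G.Reach W u v))
    (hsurj : ∀ i : Fin r, ∃ v ∈ G.supp W, comp v = i) :
    W.ncard + r = (G.supp W).ncard := by
  classical
  let f : V → V ⊕ Fin r := fun v => if v ∈ G.supp W then Sum.inr (comp v) else Sum.inl v
  have hker : G.contractSetoid W = Setoid.ker f := by
    ext x y
    change G.Reach W x y ↔ f x = f y
    by_cases hx : x ∈ G.supp W <;> by_cases hy : y ∈ G.supp W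
    · simp [f, hx, hy, hcomp x y hx hy]
    · simp only [f, hx, hy, if_true, if_false, reduceCtorEq, iff_false]
      intro h
      rcases reach_supp G h with rfl | h
      · exact hy hx
      · exact hy h.2
    · simp only [f, hx, hy, if_true, if_false, reduceCtorEq, iff_false]
      intro h
      rcases reach_supp G h with rfl | h
      · exact hx hy
      · exact hx h.1
    · simp only [f, hx, hy, if_false, Sum.inl.injEq]
      constructor
      · intro h
        rcases reach_supp G h with h | h
        · exact h
        · exact absurd h.1 hx
      · rintro rfl; exact Relation.ReflTransGen.refl
  have hrange : Set.range f = Sum.inl '' (G.supp W)ᶜ ∪ Set.range Sum.inr := by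
    ext z
    constructor
    · rintro ⟨v, rfl⟩
      by_cases hv : v ∈ G.supp W
      · right; exact ⟨comp v, by simp [f, hv]⟩
      · left; exact ⟨v, hv, by simp [f, hv]⟩
    · rintro (⟨v, hv, rfl⟩ | ⟨i, rfl⟩)
      · have hv : v ∉ G.supp W := hv
        exact ⟨v, by simp [f, hv]⟩
      · obtain ⟨v, hv, rfl⟩ := hsurj i
        exact ⟨v, by simp [f, hv]⟩
  have h1 : ncomp G W = (Set.range f).ncard := by
    unfold ncomp
    rw [hker, Nat.card_congr (Setoid.quotientKerEquivRange f), Nat.card_coe_set_eq]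
  have h2 : (Set.range f).ncard = ((G.supp W)ᶜ).ncard + r := by
    rw [hrange, Set.ncard_union_eq ?_ (Set.toFinite _) (Set.toFinite _),
      Set.ncard_image_of_injective _ Sum.inl_injective, ← Set.image_univ,
      Set.ncard_image_of_injective _ Sum.inr_injective]
    · simp
    · rw [Set.disjoint_left]
      rintro _ ⟨v, _, rfl⟩ ⟨i, hi⟩
      cases hi
  have h3 := forest_ncomp G W hforest
  have h4 := Set.ncard_add_ncard_compl (G.supp W)
  omega

theorem star_connected (G : Multigraph V E)
    (W : Set E) (r : ℕ) (comp : V → Fin r)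
    (hcomp : ∀ u v : V, u ∈ G.supp W → v ∈ G.supp W →
      (comp u = comp v ↔ G.Reach W u v))
    (hsurj : ∀ i : Fin r, ∃ v ∈ G.supp W, comp v = i)
    (S : Set (E ⊕ {p : Fin r × V // p.2 ∈ G.supp W ∧ comp p.2 = p.1}))
    (hS : Set.range Sum.inr ⊆ S) :
    (G.starGraph W comp).ConnectedOn S ↔ G.ConnectedOn (Sum.inl ⁻¹' S ∪ W) := by
  choose rep hrep hrepc using hsurj
  have hstar : ∀ v ∈ G.supp W,
      (G.starGraph W comp).Reach S (Sum.inr (comp v)) (Sum.inl v) := fun v hv =>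
    Relation.ReflTransGen.single ⟨Sum.inr ⟨(comp v, v), hv, rfl⟩, hS ⟨_, rfl⟩, rfl⟩
  constructor
  · intro h u v
    let g : V ⊕ Fin r → V := Sum.elim id rep
    have key : ∀ i v, v ∈ G.supp W → comp v = i → G.Reach (Sum.inl ⁻¹' S ∪ W) (rep i) v := by
      intro i v hv hi
      exact reach_mono' G Set.subset_union_right
        ((hcomp _ _ (hrep i) hv).1 ((hrepc i).trans hi.symm))
    refine reach_map' (G.starGraph W comp) G g ?_ (h (Sum.inl u) (Sum.inl v))
    rintro (e | ⟨⟨i, x⟩, hx, hi⟩) he a b hab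
    · obtain ⟨c, d, hcd⟩ : ∃ c d, G.inc e = s(c, d) := by
        induction h : G.inc e with | _ a b => exact ⟨a, b, rfl⟩
      have hab' : s(Sum.inl c, Sum.inl d) = s(a, b) := by
        rw [← hab]; simp [Multigraph.starGraph, hcd]
      have hr : G.Reach (Sum.inl ⁻¹' S ∪ W) c d :=
        Relation.ReflTransGen.single ⟨e, Or.inl he, hcd⟩
      rcases Sym2.eq_iff.1 hab' with ⟨rfl, rfl⟩ | ⟨rfl, rfl⟩
      · exact hr
      · exact reach_symm' G hr
    · have hab' : s(Sum.inr i, Sum.inl x) = s(a, b) := hab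
      rcases Sym2.eq_iff.1 hab' with ⟨rfl, rfl⟩ | ⟨rfl, rfl⟩
      · exact key i x hx hi
      · exact reach_symm' G (key i x hx hi)
  · intro h
    have h1 : ∀ u v, (G.starGraph W comp).Reach S (Sum.inl u) (Sum.inl v) := by
      intro u v
      refine reach_map' G (G.starGraph W comp) Sum.inl ?_ (h u v)
      rintro e (he | he) a b hab
      · exact Relation.ReflTransGen.single ⟨Sum.inl e, he, by simp [Multigraph.starGraph, hab]⟩
      · obtain ⟨ha, hb⟩ := mem_supp_of_step G he hab
        have hc : comp a = comp b :=
          (hcomp a b ha hb).2 (Relation.ReflTransGen.single ⟨e, he, hab⟩)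
        exact (reach_symm' _ (hstar a ha)).trans (hc ▸ hstar b hb)
    have h2 : ∀ x : V ⊕ Fin r, ∃ v, (G.starGraph W comp).Reach S x (Sum.inl v) := by
      rintro (v | i)
      · exact ⟨v, Relation.ReflTransGen.refl⟩
      · refine ⟨rep i, ?_⟩
        have := hstar (rep i) (hrep i)
        rwa [hrepc] at this
    intro x y
    obtain ⟨u, hu⟩ := h2 x
    obtain ⟨v, hv⟩ := h2 y
    exact (hu.trans (h1 u v)).trans (reach_symm' _ hv)

theorem tau_delete (H : Multigraph V E) (D M : Set E)
    (hdis : ∀ T ∈ H.ST M, Disjoint T D) (hMD : Disjoint M D) :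
    (H.deleteEdges D).tau (Subtype.val ⁻¹' M) = H.tau M := by
  have hreach : ∀ S : Set {e : E // e ∉ D}, ∀ u v,
      (H.deleteEdges D).Reach S u v ↔ H.Reach (Subtype.val '' S) u v := by
    intro S u v
    constructor
    · refine reach_map' (H.deleteEdges D) H id ?_
      intro e he a b hab
      exact Relation.ReflTransGen.single ⟨e.1, ⟨e, he, rfl⟩, hab⟩
    · refine reach_map' H (H.deleteEdges D) id ?_
      rintro _ ⟨e, he, rfl⟩ a b hab
      exact Relation.ReflTransGen.single ⟨e, he, hab⟩
  have himg : H.ST M = (fun S : Set {e : E // e ∉ D} => Subtype.val '' S) ''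
      (H.deleteEdges D).ST (Subtype.val ⁻¹' M) := by
    ext T
    constructor
    · intro hT
      have hd := hdis T hT
      have hval : (Subtype.val '' (Subtype.val ⁻¹' T : Set {e : E // e ∉ D})) = T := by
        ext e
        constructor
        · rintro ⟨e, he, rfl⟩; exact he
        · intro he; exact ⟨⟨e, Set.disjoint_left.1 hd he⟩, he, rfl⟩
      refine ⟨Subtype.val ⁻¹' T, ⟨⟨fun u v => ?_, ?_⟩, Set.preimage_mono hT.2⟩, hval⟩
      · rw [hreach, hval]; exact hT.1.1 u v
      · rw [← hT.1.2, ← Set.ncard_image_of_injective _ Subtype.val_injective, hval]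
    · rintro ⟨S, ⟨⟨hS1, hS2⟩, hS3⟩, rfl⟩
      refine ⟨⟨fun u v => (hreach S u v).1 (hS1 u v), ?_⟩, ?_⟩
      · rw [Set.ncard_image_of_injective _ Subtype.val_injective, hS2]
      · intro e he
        exact ⟨⟨e, Set.disjoint_left.1 hMD he⟩, hS3 he, rfl⟩
  unfold Multigraph.tau
  rw [himg, Set.ncard_image_of_injective _ (Set.image_injective.2 Subtype.val_injective)]

end Helpers

/-- `τ_G(W) = τ_{G⋆W}(W') = τ_{(G⋆W)−W₀}(W')`, where
`W' = E(G⋆W) − E(G)` and `W₀ ⊆ W`. -/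
theorem tau_starGraph {V : Type u} {E : Type v} [Fintype V] [Fintype E]
    (G : Multigraph V E) (hconn : G.Connected)
    (W : Set E) (hforest : G.IsForest W)
    (r : ℕ) (comp : V → Fin r)
    (hcomp : ∀ u v : V, u ∈ G.supp W → v ∈ G.supp W →
      (comp u = comp v ↔ G.Reach W u v))
    (hsurj : ∀ i : Fin r, ∃ v ∈ G.supp W, comp v = i)
    (W₀ : Set E) (hW₀ : W₀ ⊆ W) :
    G.tau W = (G.starGraph W comp).tau (Set.range Sum.inr) ∧
    G.tau W = ((G.starGraph W comp).deleteEdges (Sum.inl '' W₀)).tau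
      (Subtype.val ⁻¹' (Set.range Sum.inr)) := by
  have hfc := forest_card G W hforest r comp hcomp hsurj
  have hsc := star_connected G W r comp hcomp hsurj
  have hinr : (Set.range (Sum.inr : {p : Fin r × V // p.2 ∈ G.supp W ∧ comp p.2 = p.1} →
      E ⊕ {p : Fin r × V // p.2 ∈ G.supp W ∧ comp p.2 = p.1})).ncard = (G.supp W).ncard := by
    rw [← Set.image_univ, Set.ncard_image_of_injective _ Sum.inr_injective, Set.ncard_univ,
      ← Nat.card_coe_set_eq]
    exact Nat.card_congr
      ⟨fun p => ⟨p.1.2, p.2.1⟩, fun v => ⟨(comp v.1, v.1), v.2, rfl⟩,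
        by rintro ⟨⟨i, v⟩, hv, hi⟩; simp only at hi; subst hi; rfl, fun v => rfl⟩
  have hcardV : Nat.card (V ⊕ Fin r) = Nat.card V + r := by simp
  have hdis : ∀ T ∈ (G.starGraph W comp).ST (Set.range Sum.inr), Disjoint T (Sum.inl '' W) := by
    rintro T ⟨⟨hT1, hT2⟩, hT3⟩
    have hsub : Set.range Sum.inr ⊆ T \ (Sum.inl '' W) := by
      rintro _ ⟨p, rfl⟩
      refine ⟨hT3 ⟨p, rfl⟩, ?_⟩
      rintro ⟨e, _, he⟩
      cases he
    have hc : (G.starGraph W comp).ConnectedOn (T \ (Sum.inl '' W)) := by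
      rw [hsc _ hsub]
      have := (hsc _ hT3).1 hT1
      convert this using 1
      ext e
      by_cases he : e ∈ W <;> simp [he]
    have := connected_card _ hc
    have heq : T \ (Sum.inl '' W) = T :=
      Set.eq_of_subset_of_ncard_le Set.diff_subset (by omega) (Set.toFinite _)
    exact sdiff_eq_left.1 heq
  have hcard : ∀ F : Set E,
      (Sum.inl '' F ∪ Set.range Sum.inr :
        Set (E ⊕ {p : Fin r × V // p.2 ∈ G.supp W ∧ comp p.2 = p.1})).ncard
        = F.ncard + (G.supp W).ncard := by
    intro F
    rw [Set.ncard_union_eq ?_ (Set.toFinite _) (Set.toFinite _), hinr,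
      Set.ncard_image_of_injective _ Sum.inl_injective]
    rw [Set.disjoint_left]
    rintro _ ⟨v, _, rfl⟩ ⟨i, hi⟩
    cases hi
  have hpre : ∀ F : Set E, Sum.inl ⁻¹' (Sum.inl '' F ∪ Set.range Sum.inr :
        Set (E ⊕ {p : Fin r × V // p.2 ∈ G.supp W ∧ comp p.2 = p.1})) = F := by
    intro F; ext e; simp
  have hrec : ∀ S : Set (E ⊕ {p : Fin r × V // p.2 ∈ G.supp W ∧ comp p.2 = p.1}),
      Set.range Sum.inr ⊆ S → Sum.inl '' (Sum.inl ⁻¹' S) ∪ Set.range Sum.inr = S := by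
    intro S hS
    ext x
    rcases x with e | p
    · simp
    · simp [hS ⟨p, rfl⟩]
  have main : G.tau W = (G.starGraph W comp).tau (Set.range Sum.inr) := by
    unfold Multigraph.tau
    refine Set.ncard_congr (fun T _ => Sum.inl '' (T \ W) ∪ Set.range Sum.inr) ?_ ?_ ?_
    · rintro T ⟨⟨hT1, hT2⟩, hT3⟩
      refine ⟨⟨?_, ?_⟩, Set.subset_union_right⟩
      · rw [hsc _ Set.subset_union_right, hpre, Set.diff_union_of_subset hT3]
        exact hT1
      · rw [hcard, hcardV]
        have := Set.ncard_diff_add_ncard_of_subset hT3 (Set.toFinite _)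
        omega
    · rintro T T' ⟨_, hT⟩ ⟨_, hT'⟩ heq
      have := congrArg (fun S => Sum.inl ⁻¹' S) heq
      simp only [hpre] at this
      rw [← Set.diff_union_of_subset hT, ← Set.diff_union_of_subset hT', this]
    · intro S hS
      have hd := hdis S hS
      obtain ⟨⟨hS1, hS2⟩, hS3⟩ := hS
      have hd' : Disjoint (Sum.inl ⁻¹' S) W := by
        rw [Set.disjoint_left]
        intro e he heW
        exact Set.disjoint_left.1 hd he ⟨e, heW, rfl⟩
      refine ⟨Sum.inl ⁻¹' S ∪ W, ⟨⟨(hsc S hS3).1 hS1, ?_⟩, Set.subset_union_right⟩, ?_⟩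
      · rw [Set.ncard_union_eq hd' (Set.toFinite _) (Set.toFinite _)]
        have := hcard (Sum.inl ⁻¹' S)
        rw [hrec S hS3] at this
        omega
      · have : (Sum.inl ⁻¹' S ∪ W) \ W = Sum.inl ⁻¹' S := by
          rw [Set.union_diff_right]; exact sdiff_eq_left.2 hd'
        simp only [this]
        exact hrec S hS3
  refine ⟨main, main.trans (tau_delete _ _ _ ?_ ?_).symm⟩
  · intro T hT
    exact (hdis T hT).mono_right (Set.image_mono hW₀)
  · rw [Set.disjoint_left]
    rintro _ ⟨p, rfl⟩ ⟨e, _, he⟩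
    cases he

end PaperST
end

section
/- Let G = (V,E) be a connected multigraph whose vertex set is partitioned into V_0, V_1, ..., V_k where each V_i (1 ≤ i ≤ k) is a clique of G. Let M = ∪_{0≤i<j≤k} E_G(V_i,V_j) and let W be a subset of E with M ⊆ W such that G[W] is a forest. Let G⋆W be obtained from G by adding, for each component W_1,...,W_r of G[W], a new vertex w_i joined to all vertices of W_i. Let G' = (G⋆W) − M, V'_0 = V_0 ∪ (V(G⋆W) − V(G)), and W' = E(G⋆W) − E(G). Then: (i) τ_G(W) = τ_{G'}(W'); (ii) V'_0, V_1, ..., V_k is a partition of V(G') and each V_i (1 ≤ i ≤ k) is a clique of G'; (iii) E_{G'}(V_i,V_j) = ∅ for all 1 ≤ i < j ≤ k; (iv) each component of G'[W'] is a star whose center lies in V(G') − V(G) ⊆ V'_0. -/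
/-!
Spanning trees of multigraphs: common definitions.

A multigraph on a vertex type `V` with edge type `E` is given by an incidence
map `inc : E → Sym2 V` sending each edge to its (unordered) pair of endpoints.
-/

namespace PaperST

universe u v

open Multigraph

/-- The classes `V'₀, V₁, …, V_k` of `V(G⋆W)`: the class of `none` (i.e. `V₀`)
also collects all the newly added vertices. -/
def liftedClass {V : Type u} (k r : ℕ) (part : V → Option (Fin k)) :
    Option (Fin k) → Set (V ⊕ Fin r)
  | none => Sum.inl '' (part ⁻¹' {none}) ∪ Set.range Sum.inr
  | some i => Sum.inl '' (part ⁻¹' {some i})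

namespace Multigraph

variable {V : Type u} {E : Type v}

theorem reach_symm' (G : Multigraph V E) (T : Set E) {x y : V} (h : G.Reach T x y) :
    G.Reach T y x :=
  (G.contractSetoid T).iseqv.symm h

theorem reach_mono (G : Multigraph V E) {S T : Set E} (hST : S ⊆ T) {x y : V}
    (h : G.Reach S x y) : G.Reach T x y := by
  induction h with
  | refl => exact Relation.ReflTransGen.refl
  | tail _ h ih =>
    obtain ⟨e, he, hi⟩ := h
    exact ih.tail ⟨e, hST he, hi⟩

theorem reach_insert (G : Multigraph V E) (T : Set E) (e : E) (a b : V)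
    (he : G.inc e = s(a, b)) {x y : V} (h : G.Reach (insert e T) x y) :
    G.Reach T x y ∨ (G.Reach T x a ∧ G.Reach T b y) ∨ (G.Reach T x b ∧ G.Reach T a y) := by
  induction h with
  | refl => exact Or.inl Relation.ReflTransGen.refl
  | tail h1 h2 ih =>
    rename_i y z
    obtain ⟨f, hf, hi⟩ := h2
    rcases hf with rfl | hf
    · rw [he] at hi
      have hr : ∀ w, G.Reach T w w := fun w => Relation.ReflTransGen.refl
      rcases Sym2.eq_iff.1 hi with ⟨rfl, rfl⟩ | ⟨rfl, rfl⟩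
      · rcases ih with ih | ih | ih
        · exact Or.inr (Or.inl ⟨ih, hr _⟩)
        · exact Or.inr (Or.inl ⟨ih.1, hr _⟩)
        · exact Or.inl ih.1
      · rcases ih with ih | ih | ih
        · exact Or.inr (Or.inr ⟨ih, hr _⟩)
        · exact Or.inl ih.1
        · exact Or.inr (Or.inr ⟨ih.1, hr _⟩)
    · have hs : G.Step T y z := ⟨f, hf, hi⟩
      rcases ih with ih | ih | ih
      · exact Or.inl (ih.tail hs)
      · exact Or.inr (Or.inl ⟨ih.1, ih.2.tail hs⟩)
      · exact Or.inr (Or.inr ⟨ih.1, ih.2.tail hs⟩)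

/-- number of components -/
noncomputable def numComp (G : Multigraph V E) (T : Set E) : ℕ :=
  Nat.card (Quotient (G.contractSetoid T))

theorem numComp_insert [Finite V] (G : Multigraph V E) (T : Set E) (e : E) :
    G.numComp T ≤ G.numComp (insert e T) + 1 ∧
    ((∀ u v, G.inc e = s(u, v) → ¬ G.Reach T u v) →
      G.numComp T = G.numComp (insert e T) + 1) := by
  classical
  obtain ⟨a, b, he⟩ : ∃ a b, G.inc e = s(a, b) := by
    induction G.inc e with
    | _ a b => exact ⟨a, b, rfl⟩
  let B : Quotient (G.contractSetoid T) := Quotient.mk _ b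
  let q : {x : Quotient (G.contractSetoid T) // x ≠ B} →
      Quotient (G.contractSetoid (insert e T)) :=
    fun x => Quotient.map' (s₁ := G.contractSetoid T) (s₂ := G.contractSetoid (insert e T))
      id (fun _ _ h => G.reach_mono (Set.subset_insert e T) h) x.1
  have hcard : Nat.card {x : Quotient (G.contractSetoid T) // x ≠ B} + 1 = G.numComp T := by
    have h1 := Set.ncard_add_ncard_compl ({B} : Set (Quotient (G.contractSetoid T)))
    rw [Set.ncard_singleton] at h1
    have h2 : Nat.card {x : Quotient (G.contractSetoid T) // x ≠ B} =
      ({B}ᶜ : Set (Quotient (G.contractSetoid T))).ncard := rfl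
    unfold numComp
    omega
  have hinj : Function.Injective q := by
    rintro ⟨x, hx⟩ ⟨y, hy⟩ hxy
    induction x using Quotient.inductionOn with | _ x =>
    induction y using Quotient.inductionOn with | _ y =>
    have hx' : ¬ G.Reach T x b := fun h => hx (Quotient.sound h)
    have hy' : ¬ G.Reach T y b := fun h => hy (Quotient.sound h)
    have h : G.Reach (insert e T) x y := Quotient.exact hxy
    refine Subtype.ext (Quotient.sound ?_)
    rcases G.reach_insert T e a b he h with h | h | h
    · exact h
    · exact absurd (G.reach_symm' T h.2) hy'
    · exact absurd h.1 hx'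
  constructor
  · have := Nat.card_le_card_of_injective q hinj
    rw [← hcard]
    exact Nat.succ_le_succ this
  · intro hnr
    have hab := hnr a b he
    have hsur : Function.Surjective q := by
      intro y
      induction y using Quotient.inductionOn with | _ y =>
      by_cases hy : G.Reach T y b
      · refine ⟨⟨Quotient.mk _ a, fun h => hab (Quotient.exact h)⟩, ?_⟩
        refine Quotient.sound ?_
        have h1 : G.Reach (insert e T) a b :=
          Relation.ReflTransGen.single ⟨e, Set.mem_insert _ _, he⟩
        exact h1.trans (G.reach_symm' _ (G.reach_mono (Set.subset_insert e T) hy))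
      · exact ⟨⟨Quotient.mk _ y, fun h => hy (Quotient.exact h)⟩, rfl⟩
    rw [← hcard, Nat.card_congr (Equiv.ofBijective q ⟨hinj, hsur⟩)]
    rfl

theorem numComp_empty (G : Multigraph V E) : G.numComp ∅ = Nat.card V := by
  symm
  refine Nat.card_congr (Equiv.ofBijective (Quotient.mk (G.contractSetoid ∅)) ⟨?_, ?_⟩)
  · intro x y h
    have h' : G.Reach ∅ x y := Quotient.exact h
    clear h
    induction h' with
    | refl => rfl
    | tail _ h _ => obtain ⟨e, he, _⟩ := h; exact absurd he (Set.notMem_empty e)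
  · exact Quotient.mk_surjective

theorem card_le_ncard_add [Finite V] [Finite E] (G : Multigraph V E) (T : Set E) :
    Nat.card V ≤ T.ncard + G.numComp T := by
  induction T, T.toFinite using Set.Finite.induction_on with
  | empty => simp [numComp_empty]
  | insert he hT ih =>
    rename_i e T
    rw [Set.ncard_insert_of_notMem he hT]
    have := (G.numComp_insert T e).1
    omega

theorem forest_card [Finite V] [Finite E] (G : Multigraph V E) (T : Set E)
    (hF : G.IsForest T) : T.ncard + G.numComp T = Nat.card V := by
  induction T, T.toFinite using Set.Finite.induction_on with
  | empty => simp [numComp_empty]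
  | insert he hT ih =>
    rename_i e T
    rw [Set.ncard_insert_of_notMem he hT]
    have h1 : G.IsForest T := fun f hf =>
      ⟨(hF f (Set.mem_insert_of_mem _ hf)).1, fun u v huv hr =>
        (hF f (Set.mem_insert_of_mem _ hf)).2 u v huv
          (G.reach_mono (Set.sdiff_subset_sdiff_left (Set.subset_insert e T)) hr)⟩
    have h2 := (G.numComp_insert T e).2 (fun u v huv hr =>
      (hF e (Set.mem_insert _ _)).2 u v huv (G.reach_mono (by
        intro f hf
        exact ⟨Set.mem_insert_of_mem _ hf, fun h => he (h ▸ hf)⟩) hr))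
    have := ih h1
    omega

theorem connected_card [Finite V] [Finite E] (G : Multigraph V E) (T : Set E)
    (hc : G.ConnectedOn T) : Nat.card V ≤ T.ncard + 1 := by
  have h := G.card_le_ncard_add T
  have : G.numComp T ≤ 1 := by
    unfold numComp
    rw [Finite.card_le_one_iff_subsingleton]
    refine ⟨fun x y => ?_⟩
    induction x using Quotient.inductionOn with | _ x =>
    induction y using Quotient.inductionOn with | _ y =>
    exact Quotient.sound (hc x y)
  omega

section star

variable (G : Multigraph V E) (W : Set E) {r : ℕ} (comp : V → Fin r)

theorem star_back
    (hcomp : ∀ u v : V, u ∈ G.supp W → v ∈ G.supp W →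
      (comp u = comp v ↔ G.Reach W u v)) (X : Set E) {u v : V}
    (h : G.Reach (X ∪ W) u v) :
    (G.starGraph W comp).Reach (Sum.inl '' X ∪ Set.range Sum.inr) (Sum.inl u) (Sum.inl v) := by
  induction h with
  | refl => exact Relation.ReflTransGen.refl
  | tail h0 h ih =>
    rename_i x y
    refine ih.trans ?_
    obtain ⟨e, he, hi⟩ := h
    rcases he with he | he
    · exact Relation.ReflTransGen.single ⟨Sum.inl e, Or.inl ⟨e, he, rfl⟩, by
        simp [starGraph, hi]⟩
    · have hx : x ∈ G.supp W := ⟨e, he, by simp [hi]⟩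
      have hy : y ∈ G.supp W := ⟨e, he, by simp [hi]⟩
      have hxy := (hcomp x y hx hy).2 (Relation.ReflTransGen.single ⟨e, he, hi⟩)
      refine (Relation.ReflTransGen.single (b := Sum.inr (comp x))
        ⟨Sum.inr ⟨(comp x, x), hx, rfl⟩, Or.inr ⟨_, rfl⟩, Sym2.eq_swap⟩).tail ?_
      exact ⟨Sum.inr ⟨(comp x, y), hy, hxy.symm⟩, Or.inr ⟨_, rfl⟩, rfl⟩

theorem star_forw (ρ : Fin r → V) (hρ : ∀ i, ρ i ∈ G.supp W ∧ comp (ρ i) = i)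
    (hcomp : ∀ u v : V, u ∈ G.supp W → v ∈ G.supp W →
      (comp u = comp v ↔ G.Reach W u v)) (X : Set E) {x y : V ⊕ Fin r}
    (h : (G.starGraph W comp).Reach (Sum.inl '' X ∪ Set.range Sum.inr) x y) :
    G.Reach (X ∪ W) (Sum.elim id ρ x) (Sum.elim id ρ y) := by
  induction h with
  | refl => exact Relation.ReflTransGen.refl
  | tail h0 h ih =>
    rename_i x y
    refine ih.trans ?_
    obtain ⟨e, he, hi⟩ := h
    rcases he with ⟨e, he, rfl⟩ | ⟨⟨⟨i, v⟩, hv, hc⟩, rfl⟩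
    · have h2 := congrArg (Sym2.map (Sum.elim id ρ)) hi
      refine Relation.ReflTransGen.single ⟨e, Or.inl he, ?_⟩
      simpa [starGraph, Sym2.map_map, Sym2.map_id] using h2
    · have hr : G.Reach (X ∪ W) (ρ i) v :=
        G.reach_mono Set.subset_union_right
          ((hcomp _ _ (hρ i).1 hv).1 ((hρ i).2.trans hc.symm))
      rcases Sym2.eq_iff.1 hi with ⟨rfl, rfl⟩ | ⟨rfl, rfl⟩
      · exact hr
      · exact G.reach_symm' _ hr

theorem star_rep (ρ : Fin r → V) (hρ : ∀ i, ρ i ∈ G.supp W ∧ comp (ρ i) = i)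
    (X : Set E) (x : V ⊕ Fin r) :
    (G.starGraph W comp).Reach (Sum.inl '' X ∪ Set.range Sum.inr) x
      (Sum.inl (Sum.elim id ρ x)) := by
  rcases x with v | i
  · exact Relation.ReflTransGen.refl
  · exact Relation.ReflTransGen.single
      ⟨Sum.inr ⟨(i, ρ i), (hρ i).1, (hρ i).2⟩, Or.inr ⟨_, rfl⟩, rfl⟩

theorem star_connected (ρ : Fin r → V) (hρ : ∀ i, ρ i ∈ G.supp W ∧ comp (ρ i) = i)
    (hcomp : ∀ u v : V, u ∈ G.supp W → v ∈ G.supp W →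
      (comp u = comp v ↔ G.Reach W u v)) (X : Set E) :
    (G.starGraph W comp).ConnectedOn (Sum.inl '' X ∪ Set.range Sum.inr) ↔
      G.ConnectedOn (X ∪ W) := by
  constructor
  · intro h u v
    exact G.star_forw W comp ρ hρ hcomp X (h (Sum.inl u) (Sum.inl v))
  · intro h x y
    exact (G.star_rep W comp ρ hρ X x).trans ((G.star_back W comp hcomp X (h _ _)).trans
      (reach_symm' _ _ (G.star_rep W comp ρ hρ X y)))

theorem star_card [Finite V] [Finite E]
    (ρ : Fin r → V) (hρ : ∀ i, ρ i ∈ G.supp W ∧ comp (ρ i) = i)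
    (hcomp : ∀ u v : V, u ∈ G.supp W → v ∈ G.supp W →
      (comp u = comp v ↔ G.Reach W u v)) (hF : G.IsForest W) :
    (Set.range (Sum.inr : _ → E ⊕ {p : Fin r × V // p.2 ∈ G.supp W ∧ comp p.2 = p.1})).ncard
      = W.ncard + r := by
  have h1 := G.forest_card W hF
  have h2 := (G.starGraph W comp).forest_card (Set.range Sum.inr) (by
    rintro _ ⟨⟨⟨i, v⟩, hv, hc⟩, rfl⟩
    refine ⟨by simp [starGraph], ?_⟩
    have key : ∀ y, (G.starGraph W comp).Reach (Set.range Sum.inr \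
        {Sum.inr ⟨(i, v), hv, hc⟩}) (Sum.inl v) y → y = Sum.inl v := by
      intro y h
      induction h with
      | refl => rfl
      | tail _ h ih =>
        subst ih
        obtain ⟨_, ⟨⟨⟨⟨j, w⟩, hw, hd⟩, rfl⟩, hne⟩, hi⟩ := h
        exfalso
        apply hne
        rcases Sym2.eq_iff.1 hi with ⟨h, _⟩ | ⟨_, h⟩
        · cases h
        · cases h
          dsimp at hc hd
          subst hc
          subst hd
          rfl
    intro x y hi hr
    rcases Sym2.eq_iff.1 hi with ⟨rfl, rfl⟩ | ⟨rfl, rfl⟩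
    · cases key _ (reach_symm' _ _ hr)
    · cases key _ hr)
  have h3 : G.numComp W = (G.starGraph W comp).numComp (Set.range Sum.inr) := by
    refine Nat.card_congr (Equiv.ofBijective (Quotient.map' (s₁ := G.contractSetoid W)
      (s₂ := (G.starGraph W comp).contractSetoid (Set.range Sum.inr)) Sum.inl ?_) ⟨?_, ?_⟩)
    · intro x y h
      have := G.star_back W comp hcomp ∅ (u := x) (v := y) (by
        rw [Set.empty_union]; exact h)
      rw [Set.image_empty, Set.empty_union] at this
      exact this
    · intro x y hxy
      induction x using Quotient.inductionOn with | _ x =>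
      induction y using Quotient.inductionOn with | _ y =>
      have h : (G.starGraph W comp).Reach (Set.range Sum.inr) (Sum.inl x) (Sum.inl y) :=
        Quotient.exact hxy
      have := G.star_forw W comp ρ hρ hcomp ∅ (x := Sum.inl x) (y := Sum.inl y) (by simpa using h)
      rw [Set.empty_union] at this
      exact Quotient.sound this
    · intro y
      induction y using Quotient.inductionOn with | _ y =>
      refine ⟨Quotient.mk _ (Sum.elim id ρ y), Quotient.sound ?_⟩
      have := G.star_rep W comp ρ hρ ∅ y
      exact reach_symm' _ _ (by simpa using this)
  rw [Nat.card_sum, Nat.card_fin] at h2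
  omega

theorem reach_delete {V : Type u} {E : Type v} (H : Multigraph V E) (D : Set E)
    (T : Set {e // e ∉ D}) (x y : V) :
    (H.deleteEdges D).Reach T x y ↔ H.Reach (Subtype.val '' T) x y := by
  have : (H.deleteEdges D).Step T = H.Step (Subtype.val '' T) := by
    funext a b
    apply propext
    constructor
    · rintro ⟨e, he, hi⟩
      exact ⟨e, ⟨e, he, rfl⟩, hi⟩
    · rintro ⟨_, ⟨e, he, rfl⟩, hi⟩
      exact ⟨e, he, hi⟩
  unfold Reach
  rw [this]

theorem spanning_delete {V : Type u} {E : Type v} (H : Multigraph V E) (D : Set E)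
    (T : Set {e // e ∉ D}) :
    (H.deleteEdges D).IsSpanningTree T ↔ H.IsSpanningTree (Subtype.val '' T) := by
  unfold IsSpanningTree ConnectedOn
  rw [Set.ncard_image_of_injective _ Subtype.val_injective]
  simp only [reach_delete]

theorem star_spanning [Finite V] [Finite E]
    (ρ : Fin r → V) (hρ : ∀ i, ρ i ∈ G.supp W ∧ comp (ρ i) = i)
    (hcomp : ∀ u v : V, u ∈ G.supp W → v ∈ G.supp W →
      (comp u = comp v ↔ G.Reach W u v)) (hF : G.IsForest W) (X : Set E) :
    (G.starGraph W comp).IsSpanningTree (Sum.inl '' X ∪ Set.range Sum.inr) ↔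
      G.IsSpanningTree (X ∪ W) ∧ Disjoint X W := by
  have hc := G.star_card W comp ρ hρ hcomp hF
  have hcard : ∀ Y : Set E, (Sum.inl '' Y ∪ Set.range Sum.inr :
      Set (E ⊕ {p : Fin r × V // p.2 ∈ G.supp W ∧ comp p.2 = p.1})).ncard
      = Y.ncard + (W.ncard + r) := by
    intro Y
    rw [Set.ncard_union_eq ?_ (Set.toFinite _) (Set.toFinite _), hc,
      Set.ncard_image_of_injective _ Sum.inl_injective]
    rw [Set.disjoint_left]
    rintro _ ⟨e, _, rfl⟩ ⟨p, hp⟩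
    cases hp
  unfold IsSpanningTree
  rw [G.star_connected W comp ρ hρ hcomp X, hcard, Nat.card_sum, Nat.card_fin]
  constructor
  · rintro ⟨h1, h2⟩
    have hd : Disjoint X W := by
      rw [Set.disjoint_left]
      intro e he hw
      have h3 := G.connected_card _ h1
      have h4 : X ∪ W = (X \ {e}) ∪ W := by
        ext f
        by_cases hf : f = e
        · subst hf; simp [hw]
        · simp [hf]
      rw [h4] at h3
      have h5 := Set.ncard_union_le (X \ {e}) W
      have h6 := Set.ncard_sdiff_singleton_add_one he (Set.toFinite _)
      omega
    refine ⟨⟨h1, ?_⟩, hd⟩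
    rw [Set.ncard_union_eq hd (Set.toFinite _) (Set.toFinite _)]
    omega
  · rintro ⟨⟨h1, h2⟩, hd⟩
    rw [Set.ncard_union_eq hd (Set.toFinite _) (Set.toFinite _)] at h2
    exact ⟨h1, by omega⟩

theorem star_tau [Finite V] [Finite E]
    (ρ : Fin r → V) (hρ : ∀ i, ρ i ∈ G.supp W ∧ comp (ρ i) = i)
    (hcomp : ∀ u v : V, u ∈ G.supp W → v ∈ G.supp W →
      (comp u = comp v ↔ G.Reach W u v)) (hF : G.IsForest W) (M : Set E) (hMW : M ⊆ W) :
    G.tau W = ((G.starGraph W comp).deleteEdges (Sum.inl '' M)).tau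
      (Subtype.val ⁻¹' (Set.range Sum.inr)) := by
  have hval : ∀ X : Set E, Disjoint X M → (Subtype.val '' (Subtype.val ⁻¹'
      (Sum.inl '' X ∪ Set.range Sum.inr) : Set {e : E ⊕ {p : Fin r × V //
        p.2 ∈ G.supp W ∧ comp p.2 = p.1} // e ∉ Sum.inl '' M})) =
      Sum.inl '' X ∪ Set.range Sum.inr := by
    intro X hX
    apply Set.image_preimage_eq_of_subset
    rw [Subtype.range_coe_subtype]
    rintro _ (⟨e, he, rfl⟩ | ⟨p, rfl⟩) ⟨f, hf, hfe⟩
    · cases hfe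
      exact Set.disjoint_left.1 hX he hf
    · cases hfe
  unfold tau
  refine Set.ncard_congr (fun T _ => Subtype.val ⁻¹' (Sum.inl '' (T \ W) ∪ Set.range Sum.inr))
    ?_ ?_ ?_
  · rintro T ⟨hT, hWT⟩
    refine ⟨?_, Set.preimage_mono Set.subset_union_right⟩
    rw [spanning_delete, hval _ (Set.disjoint_sdiff_left.mono_right hMW),
      G.star_spanning W comp ρ hρ hcomp hF, Set.sdiff_union_of_subset hWT]
    exact ⟨hT, Set.disjoint_sdiff_left⟩
  · rintro T S ⟨hT, hWT⟩ ⟨hS, hWS⟩ h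
    have h := congrArg (Set.image Subtype.val) h
    rw [hval _ (Set.disjoint_sdiff_left.mono_right hMW),
      hval _ (Set.disjoint_sdiff_left.mono_right hMW)] at h
    have h := congrArg (Set.preimage Sum.inl) h
    have h' : T \ W = S \ W := by
      ext e
      have := congrArg (e ∈ ·) h
      simpa using this
    rw [← Set.sdiff_union_of_subset hWT, h', Set.sdiff_union_of_subset hWS]
  · rintro T' ⟨hT, hW⟩
    rw [spanning_delete] at hT
    have heq : Subtype.val '' T' = Sum.inl '' (Sum.inl ⁻¹' (Subtype.val '' T')) ∪
        Set.range Sum.inr := by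
      ext x
      constructor
      · intro hx
        rcases x with e | p
        · exact Or.inl ⟨e, hx, rfl⟩
        · exact Or.inr ⟨p, rfl⟩
      · rintro (⟨e, he, rfl⟩ | ⟨p, rfl⟩)
        · exact he
        · exact ⟨⟨Sum.inr p, by rintro ⟨f, _, hf⟩; cases hf⟩, hW ⟨p, rfl⟩, rfl⟩
    rw [heq, G.star_spanning W comp ρ hρ hcomp hF] at hT
    refine ⟨_, ⟨hT.1, Set.subset_union_right⟩, ?_⟩
    rw [Set.union_sdiff_right, hT.2.sdiff_eq_left, ← heq,
      Set.preimage_image_eq _ Subtype.val_injective]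

theorem mem_between {V : Type u} {E : Type v} (G : Multigraph V E) {k : ℕ}
    {part : V → Option (Fin k)} {M : Set E}
    (hM : M = ⋃ (i : Option (Fin k)), ⋃ (j : Option (Fin k)), ⋃ (_ : i ≠ j),
      G.edgesBetween (part ⁻¹' {i}) (part ⁻¹' {j})) {e : E} {u v : V}
    (he : G.inc e = s(u, v)) : e ∈ M ↔ part u ≠ part v := by
  subst hM
  simp only [Set.mem_iUnion]
  constructor
  · rintro ⟨i, j, hij, a, b, hab, ha, hb⟩
    rw [he] at hab
    have ha : part a = i := ha
    have hb : part b = j := hb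
    rcases Sym2.eq_iff.1 hab with ⟨rfl, rfl⟩ | ⟨rfl, rfl⟩
    · rw [ha, hb]; exact hij
    · rw [ha, hb]; exact hij.symm
  · intro h
    exact ⟨_, _, h, u, v, he, rfl, rfl⟩

end star

end Multigraph

/-- the reduction of `τ_G(W)` to a special case, via the graph
`G' = (G⋆W) − M`. The partition `V₀, V₁, …, V_k` is encoded by
`part : V → Option (Fin k)`, with `V₀ = part ⁻¹' {none}` and
`Vᵢ = part ⁻¹' {some i}` a clique for each `i`. -/
theorem tau_starGraph_reduction {V : Type u} {E : Type v} [Fintype V] [Fintype E]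
    (G : Multigraph V E) (hconn : G.Connected)
    (k : ℕ) (part : V → Option (Fin k))
    (hne : ∀ i : Fin k, (part ⁻¹' {some i}).Nonempty)
    (hclique : ∀ i : Fin k, G.IsClique (part ⁻¹' {some i}))
    (M : Set E)
    (hM : M = ⋃ (i : Option (Fin k)), ⋃ (j : Option (Fin k)), ⋃ (_ : i ≠ j),
      G.edgesBetween (part ⁻¹' {i}) (part ⁻¹' {j}))
    (W : Set E) (hMW : M ⊆ W) (hforest : G.IsForest W)
    (r : ℕ) (comp : V → Fin r)
    (hcomp : ∀ u v : V, u ∈ G.supp W → v ∈ G.supp W →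
      (comp u = comp v ↔ G.Reach W u v))
    (hsurj : ∀ i : Fin r, ∃ v ∈ G.supp W, comp v = i) :
    -- (i) `τ_G(W) = τ_{G'}(W')`
    (G.tau W = ((G.starGraph W comp).deleteEdges (Sum.inl '' M)).tau
      (Subtype.val ⁻¹' (Set.range Sum.inr))) ∧
    -- (ii) `V'₀, V₁, …, V_k` is a partition of `V(G')`, each `Vᵢ` a clique of `G'`
    ((∀ x : V ⊕ Fin r, ∃! i : Option (Fin k), x ∈ liftedClass k r part i) ∧
      ∀ i : Fin k, ((G.starGraph W comp).deleteEdges (Sum.inl '' M)).IsClique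
        (liftedClass k r part (some i))) ∧
    -- (iii) `E_{G'}(Vᵢ, Vⱼ) = ∅` for distinct `i, j ∈ {1, …, k}`
    (∀ i j : Fin k, i ≠ j →
      ((G.starGraph W comp).deleteEdges (Sum.inl '' M)).edgesBetween
        (liftedClass k r part (some i)) (liftedClass k r part (some j)) = ∅) ∧
    -- (iv) every component of `G'[W']` is a star with center among the new vertices
    ((G.starGraph W comp).deleteEdges (Sum.inl '' M)).StarComponents
      (Subtype.val ⁻¹' (Set.range Sum.inr))
      (Set.range (Sum.inr : Fin r → V ⊕ Fin r)) := by
  classical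
  choose ρ hρ using hsurj
  have hlift : ∀ (i : Fin k) (x : V ⊕ Fin r), x ∈ liftedClass k r part (some i) →
      ∃ v, part v = some i ∧ x = Sum.inl v := by
    rintro i x ⟨v, hv, rfl⟩
    exact ⟨v, hv, rfl⟩
  refine ⟨G.star_tau W comp ρ hρ hcomp hforest M hMW, ⟨?_, ?_⟩, ?_, ?_⟩
  · rintro (v | i)
    · refine ⟨part v, ?_, ?_⟩
      · show Sum.inl v ∈ liftedClass k r part (part v)
        cases h : part v with
        | none => exact Or.inl ⟨v, h, rfl⟩
        | some i => exact ⟨v, h, rfl⟩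
      · rintro (_ | j) h
        · rcases h with ⟨w, hw, h⟩ | ⟨j, h⟩
          · cases h; exact hw.symm
          · cases h
        · obtain ⟨w, hw, h⟩ := hlift j _ h
          cases h; exact hw.symm
    · refine ⟨none, Or.inr ⟨i, rfl⟩, ?_⟩
      rintro (_ | j) h
      · rfl
      · obtain ⟨w, hw, h⟩ := hlift j _ h
        cases h
  · intro i
    constructor
    · intro x hx y hy hxy
      obtain ⟨u, hu, rfl⟩ := hlift i x hx
      obtain ⟨v, hv, rfl⟩ := hlift i y hy
      obtain ⟨e, he, huniq⟩ := (hclique i).1 u hu v hv (fun h => hxy (congrArg _ h))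
      refine ⟨⟨Sum.inl e, ?_⟩, ?_, ?_⟩
      · rintro ⟨f, hf, hfe⟩
        cases hfe
        exact (G.mem_between hM he).1 hf (hu.trans hv.symm)
      · show (G.inc e).map Sum.inl = _
        rw [he]; rfl
      · rintro ⟨f | p, hf⟩ hi
        · have hi : (G.inc f).map Sum.inl = (s(u, v)).map (Sum.inl : V → V ⊕ Fin r) := hi
          have := huniq f (Sym2.map.injective Sum.inl_injective hi)
          subst this
          rfl
        · have hi : s(Sum.inr p.val.1, Sum.inl p.val.2) = s(Sum.inl u, Sum.inl v) := hi
          simp at hi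
    · rintro ⟨e | p, he⟩ hw hd
      · have hd : ((G.inc e).map (Sum.inl : V → V ⊕ Fin r)).IsDiag := hd
        have hw : ∀ x ∈ (G.inc e).map (Sum.inl : V → V ⊕ Fin r),
          x ∈ liftedClass k r part (some i) := hw
        refine (hclique i).2 e ?_ ?_
        · intro v hv
          obtain ⟨w, hw, h⟩ := hlift i _ (hw (Sum.inl v) (Sym2.mem_map.2 ⟨v, hv, rfl⟩))
          cases h; exact hw
        · revert hd
          induction G.inc e with
          | _ a b => simp
      · obtain ⟨w, hw, h⟩ := hlift i _ (hw (Sum.inr p.val.1) (Sym2.mem_mk_left _ _))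
        cases h
  · intro i j hij
    rw [Set.eq_empty_iff_forall_notMem]
    rintro ⟨e | p, he⟩ ⟨x, y, hi, hx, hy⟩
    · obtain ⟨u, hu, rfl⟩ := hlift i x hx
      obtain ⟨v, hv, rfl⟩ := hlift j y hy
      have hi : (G.inc e).map Sum.inl = (s(u, v)).map (Sum.inl : V → V ⊕ Fin r) := hi
      have hi := Sym2.map.injective Sum.inl_injective hi
      refine he ⟨e, (G.mem_between hM hi).2 ?_, rfl⟩
      rw [hu, hv]
      exact fun h => hij (Option.some_injective _ h)
    · obtain ⟨u, hu, rfl⟩ := hlift i x hx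
      obtain ⟨v, hv, rfl⟩ := hlift j y hy
      have hi : s(Sum.inr p.val.1, Sum.inl p.val.2) = s(Sum.inl u, Sum.inl v) := hi
      simp at hi
  · have hinv : ∀ x y, ((G.starGraph W comp).deleteEdges (Sum.inl '' M)).Reach
        (Subtype.val ⁻¹' (Set.range Sum.inr)) x y → Sum.elim comp id x = Sum.elim comp id y := by
      intro x y h
      induction h with
      | refl => rfl
      | tail _ h ih =>
        refine ih.trans ?_
        obtain ⟨⟨_, hn⟩, ⟨⟨⟨i, v⟩, hv, hc⟩, rfl⟩, hi⟩ := h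
        rcases Sym2.eq_iff.1 hi with ⟨rfl, rfl⟩ | ⟨rfl, rfl⟩
        · exact hc.symm
        · exact hc
    have hmem : ∀ (p : {p : Fin r × V // p.2 ∈ G.supp W ∧ comp p.2 = p.1}) (x : V ⊕ Fin r),
        x ∈ s((Sum.inr p.val.1 : V ⊕ Fin r), Sum.inl p.val.2) →
        Sum.elim comp id x = p.val.1 := by
      intro p x hx
      rcases Sym2.mem_iff.1 hx with rfl | rfl
      · rfl
      · exact p.2.2
    have hec : ∀ p q hp hq, ((G.starGraph W comp).deleteEdges (Sum.inl '' M)).EdgeConn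
        (Subtype.val ⁻¹' (Set.range Sum.inr)) ⟨Sum.inr p, hp⟩ ⟨Sum.inr q, hq⟩ →
        p.val.1 = q.val.1 := by
      rintro p q hp hq ⟨x, y, hx, hy, hr⟩
      rw [← hmem p x hx, ← hmem q y hy]
      exact hinv x y hr
    rintro ⟨_, hp⟩ ⟨p, rfl⟩
    refine ⟨Sum.inr p.val.1, ⟨_, rfl⟩, ?_⟩
    rintro ⟨_, hq⟩ ⟨q, rfl⟩ hpq
    have h1 := hec p q hp hq hpq
    refine ⟨?_, ?_, ?_⟩
    · rw [h1]; exact Sym2.mem_mk_left _ _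
    · show ¬ (s((Sum.inr q.val.1 : V ⊕ Fin r), Sum.inl q.val.2)).IsDiag
      simp
    · rintro ⟨_, hg⟩ ⟨g, rfl⟩ _ hi
      have hi : s((Sum.inr g.val.1 : V ⊕ Fin r), Sum.inl g.val.2) =
        s((Sum.inr q.val.1 : V ⊕ Fin r), Sum.inl q.val.2) := hi
      have : g = q := by
        apply Subtype.ext
        apply Prod.ext
        · simp at hi; exact hi.1
        · simp at hi; exact hi.2
      subst this
      rfl

end PaperST
end
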